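/- Let N ≥ 3, p > 0, α, β ∈ ℝ, γ ∈ (0,1), and let φ : (0,∞) → (0,∞) be locally γ-Hölder continuous and satisfy, for some constants c₁, c₂ > 0: c₁ r^α ≤ φ(r) ≤ c₂ r^α for all 0 < r < 1, and c₁ r^β ≤ φ(r) ≤ c₂ r^β for all r > 1. Then the equation −Δu = φ(|x|) u^{−p} has a C² positive solution on ℝ^N \ {0} if and only if N + α + p(N−2) > 0 and β < −2. -/

import Mathlib

open Metric Set MeasureTheory Filter

noncomputable def laplacian {N : ℕ} (u : EuclideanSpace ℝ (Fin N) → ℝ)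
    (x : EuclideanSpace ℝ (Fin N)) : ℝ :=
  ∑ i, iteratedFDeriv ℝ 2 u x ![EuclideanSpace.single i 1, EuclideanSpace.single i 1]

/-- A `C²` positive solution of `-Δu = φ(|x|) u^{-p}` on `ℝ^N \ {0}`. -/
def IsSol {N : ℕ} (φ : ℝ → ℝ) (p : ℝ) (u : EuclideanSpace ℝ (Fin N) → ℝ) : Prop :=
  ContDiffOn ℝ 2 u {(0 : EuclideanSpace ℝ (Fin N))}ᶜ ∧
    ∀ x : EuclideanSpace ℝ (Fin N), x ≠ 0 →
      0 < u x ∧ -laplacian u x = φ ‖x‖ * u x ^ (-p)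


lemma second_deriv_line {N : ℕ} {w : EuclideanSpace ℝ (Fin N) → ℝ} {x e : EuclideanSpace ℝ (Fin N)}
    (hw : ContDiffAt ℝ 2 w x) :
    deriv (deriv (fun s : ℝ => w (x + s • e))) 0 = iteratedFDeriv ℝ 2 w x ![e, e] := by
  have hev : ∀ᶠ y in nhds x, DifferentiableAt ℝ w y := by
    have := hw.eventually (by simp)
    filter_upwards [this] with y hy using hy.differentiableAt (by simp)
  have hl : ∀ s : ℝ, HasDerivAt (fun s : ℝ => x + s • e) e s := by
    intro s
    simpa using ((hasDerivAt_id s).smul_const e).const_add x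
  have hc : Tendsto (fun s : ℝ => x + s • e) (nhds 0) (nhds x) := by
    have := (hl 0).continuousAt.tendsto
    simpa using this
  have h1 : deriv (fun s : ℝ => w (x + s • e)) =ᶠ[nhds 0] fun s => fderiv ℝ w (x + s • e) e := by
    filter_upwards [hc.eventually hev] with s hs
    exact (hs.hasFDerivAt.comp_hasDerivAt s (hl s)).deriv
  rw [h1.deriv_eq, iteratedFDeriv_two_apply]
  have h2 : DifferentiableAt ℝ (fderiv ℝ w) x :=
    (hw.fderiv_right (m := 1) (by norm_num)).differentiableAt (by simp)
  have h2' : HasFDerivAt (fderiv ℝ w) (fderiv ℝ (fderiv ℝ w) x) (x + (0:ℝ) • e) := by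
    simpa using h2.hasFDerivAt
  have h3 := h2'.comp_hasDerivAt 0 (hl 0)
  have h4 := h3.clm_apply (hasDerivAt_const (0:ℝ) e)
  have := h4.deriv
  simpa using this

lemma laplacian_nonneg_of_isLocalMin {N : ℕ} {w : EuclideanSpace ℝ (Fin N) → ℝ}
    {x : EuclideanSpace ℝ (Fin N)}
    (hw : ContDiffAt ℝ 2 w x) (hm : IsLocalMin w x) : 0 ≤ laplacian w x := by
  unfold laplacian
  apply Finset.sum_nonneg
  intro i _
  set e : EuclideanSpace ℝ (Fin N) := EuclideanSpace.single i 1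
  rw [← second_deriv_line hw]
  set g : ℝ → ℝ := fun s : ℝ => w (x + s • e) with hg
  by_contra hneg
  push Not at hneg
  have hcl : Continuous (fun s : ℝ => x + s • e) := by fun_prop
  have hc : Tendsto (fun s : ℝ => x + s • e) (nhds 0) (nhds x) := by
    have := hcl.tendsto 0
    simpa using this
  have hmin : IsLocalMin g 0 := by
    have := hc.eventually hm
    filter_upwards [this] with s hs
    simpa [hg] using hs
  have hgc : ContinuousAt g 0 := by
    have : ContinuousAt w (x + (0:ℝ) • e) := by simpa using hw.continuousAt
    exact ContinuousAt.comp (g := w) this hcl.continuousAt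
  have hmax : IsLocalMax g 0 := isLocalMax_of_deriv_deriv_neg hneg hmin.deriv_eq_zero hgc
  have hconst : g =ᶠ[nhds 0] fun _ => g 0 := by
    filter_upwards [hmin, hmax] with s h1 h2
    exact le_antisymm h2 h1
  have h1 : deriv g =ᶠ[nhds 0] fun _ => 0 := by
    have := hconst.deriv
    simpa using this
  rw [h1.deriv_eq] at hneg
  simp at hneg

lemma laplacian_sub {N : ℕ} {u w : EuclideanSpace ℝ (Fin N) → ℝ} {x : EuclideanSpace ℝ (Fin N)}
    (hu : ContDiffAt ℝ 2 u x) (hw : ContDiffAt ℝ 2 w x) :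
    laplacian (fun y => u y - w y) x = laplacian u x - laplacian w x := by
  unfold laplacian
  rw [← Finset.sum_sub_distrib]
  refine Finset.sum_congr rfl fun i _ => ?_
  have : (fun y => u y - w y) = u - w := rfl
  rw [this, iteratedFDeriv_sub_apply hu hw]
  simp

/-- Laplacian of a function of `‖x‖ ^ 2`. -/
lemma laplacian_comp_normSq {N : ℕ} {F F1 : ℝ → ℝ} {F2 : ℝ} {x : EuclideanSpace ℝ (Fin N)}
    (h1 : ∀ᶠ s in nhds (‖x‖ ^ 2), HasDerivAt F (F1 s) s)
    (h2 : HasDerivAt F1 F2 (‖x‖ ^ 2)) :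
    laplacian (fun y => F (‖y‖ ^ 2)) x = 4 * ‖x‖ ^ 2 * F2 + 2 * N * F1 (‖x‖ ^ 2) := by
  have hq : ∀ y : EuclideanSpace ℝ (Fin N),
      HasFDerivAt (fun y : EuclideanSpace ℝ (Fin N) => ‖y‖ ^ 2) (2 • innerSL ℝ y) y :=
    fun y => (hasStrictFDerivAt_norm_sq y).hasFDerivAt
  have hcq : Continuous (fun y : EuclideanSpace ℝ (Fin N) => ‖y‖ ^ 2) := by fun_prop
  have hev : fderiv ℝ (fun y : EuclideanSpace ℝ (Fin N) => F (‖y‖ ^ 2)) =ᶠ[nhds x]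
      fun y => F1 (‖y‖ ^ 2) • (2 • innerSL ℝ y) := by
    filter_upwards [hcq.continuousAt.eventually h1] with y hy
    exact (hy.comp_hasFDerivAt y (hq y)).fderiv
  have hA : HasFDerivAt (fun y : EuclideanSpace ℝ (Fin N) => F1 (‖y‖ ^ 2))
      (F2 • (2 • innerSL ℝ x)) x := h2.comp_hasFDerivAt x (hq x)
  have hB : HasFDerivAt (fun y : EuclideanSpace ℝ (Fin N) => 2 • innerSL ℝ y)
      (2 • innerSL ℝ : EuclideanSpace ℝ (Fin N) →L[ℝ] EuclideanSpace ℝ (Fin N) →L[ℝ] ℝ) x :=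
    (2 • innerSL ℝ : EuclideanSpace ℝ (Fin N) →L[ℝ] EuclideanSpace ℝ (Fin N) →L[ℝ] ℝ).hasFDerivAt
  have hC : HasFDerivAt (fun y : EuclideanSpace ℝ (Fin N) => F1 (‖y‖ ^ 2) • (2 • innerSL ℝ y)) _ x :=
    hA.smul hB
  unfold laplacian
  have : ∀ i, iteratedFDeriv ℝ 2 (fun y : EuclideanSpace ℝ (Fin N) => F (‖y‖ ^ 2)) x
      ![EuclideanSpace.single i 1, EuclideanSpace.single i 1]
      = 4 * F2 * (x i) ^ 2 + 2 * F1 (‖x‖ ^ 2) := by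
    intro i
    rw [iteratedFDeriv_two_apply, hev.fderiv_eq, hC.fderiv]
    have i1 : (innerSL ℝ (EuclideanSpace.single i (1:ℝ) : EuclideanSpace ℝ (Fin N)))
        (EuclideanSpace.single i 1) = 1 := by
      rw [innerSL_apply_apply]; simp
    have i2 : inner ℝ x (EuclideanSpace.single i (1:ℝ)) = x i := by
      rw [EuclideanSpace.inner_single_right]; simp
    simp [i1, i2]
    ring
  rw [Finset.sum_congr rfl fun i _ => this i, Finset.sum_add_distrib, ← Finset.mul_sum,
    EuclideanSpace.norm_sq_eq]
  simp
  ring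

/-- Laplacian of `v (‖x‖ ^ (2 - N))`. -/
lemma laplacian_comp_fund {N : ℕ} {v v1 : ℝ → ℝ} {v2 : ℝ} {x : EuclideanSpace ℝ (Fin N)}
    (hx : x ≠ 0)
    (h1 : ∀ t, 0 < t → HasDerivAt v (v1 t) t)
    (h2 : HasDerivAt v1 v2 (‖x‖ ^ (2 - (N:ℝ)))) :
    laplacian (fun y => v (‖y‖ ^ (2 - (N:ℝ)))) x
      = v2 * ((N:ℝ) - 2) ^ 2 * ‖x‖ ^ (2 - 2 * (N:ℝ)) := by
  have hx0 : 0 < ‖x‖ := norm_pos_iff.2 hx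
  set m : ℝ := (2 - (N:ℝ)) / 2 with hm
  have hpow : ∀ (y : EuclideanSpace ℝ (Fin N)) (a : ℝ), (‖y‖ ^ 2) ^ a = ‖y‖ ^ (2 * a) := by
    intro y a
    rw [← Real.rpow_natCast, ← Real.rpow_mul (norm_nonneg y)]
    norm_num
  have e1 : (fun y : EuclideanSpace ℝ (Fin N) => v (‖y‖ ^ (2 - (N:ℝ))))
      = fun y => (fun s : ℝ => v (s ^ m)) (‖y‖ ^ 2) := by
    funext y
    simp only [hpow]
    congr 2
    rw [hm]; ring
  have hT : (‖x‖ ^ 2) ^ m = ‖x‖ ^ (2 - (N:ℝ)) := by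
    rw [hpow]; congr 1; rw [hm]; ring
  have hs : 0 < ‖x‖ ^ 2 := by positivity
  have H1 : ∀ s : ℝ, 0 < s → HasDerivAt (fun s : ℝ => v (s ^ m)) (v1 (s ^ m) * (m * s ^ (m - 1))) s := by
    intro s hs
    exact (h1 _ (Real.rpow_pos_of_pos hs m)).comp s (Real.hasDerivAt_rpow_const (Or.inl hs.ne'))
  have H2 : HasDerivAt (fun s : ℝ => v1 (s ^ m) * (m * s ^ (m - 1)))
      ((v2 * (m * (‖x‖ ^ 2) ^ (m - 1))) * (m * (‖x‖ ^ 2) ^ (m - 1))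
        + v1 ((‖x‖ ^ 2) ^ m) * (m * ((m - 1) * (‖x‖ ^ 2) ^ (m - 1 - 1)))) (‖x‖ ^ 2) := by
    have h2' : HasDerivAt v1 v2 ((‖x‖ ^ 2) ^ m) := by rw [hT]; exact h2
    exact (h2'.comp (‖x‖ ^ 2) (Real.hasDerivAt_rpow_const (Or.inl hs.ne'))).mul
      ((Real.hasDerivAt_rpow_const (Or.inl hs.ne')).const_mul m)
  rw [e1, laplacian_comp_normSq (F := fun s : ℝ => v (s ^ m)) (F1 := fun s : ℝ => v1 (s ^ m) * (m * s ^ (m - 1)))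
    (by filter_upwards [lt_mem_nhds hs] with s hs using H1 s hs) H2]
  have p1 : (‖x‖ ^ 2) ^ (m - 1) = ‖x‖ ^ 2 * (‖x‖ ^ 2) ^ (m - 1 - 1) := by
    nth_rewrite 2 [← Real.rpow_one (‖x‖ ^ 2)]
    rw [← Real.rpow_add hs]; congr 1; ring
  have p2 : ‖x‖ ^ (2 - 2 * (N:ℝ)) = ‖x‖ ^ 2 * ((‖x‖ ^ 2) ^ (m - 1)) ^ 2 := by
    rw [← Real.rpow_natCast ((‖x‖ ^ 2) ^ (m - 1)), ← Real.rpow_mul hs.le]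
    have e3 : ‖x‖ ^ 2 * (‖x‖ ^ 2) ^ ((m - 1) * ((2:ℕ):ℝ))
        = (‖x‖ ^ 2) ^ (1 + (m - 1) * ((2:ℕ):ℝ)) := by
      rw [Real.rpow_add hs, Real.rpow_one]
    rw [e3, hpow]; congr 1; rw [hm]; push_cast; ring
  rw [p2]
  have hN : (N:ℝ) = 2 - 2 * m := by rw [hm]; ring
  rw [hN, p1]
  ring

lemma contDiffOn_two_of_hasDerivAt {v v1 v2 : ℝ → ℝ}
    (h1 : ∀ t, 0 < t → HasDerivAt v (v1 t) t) (h2 : ∀ t, 0 < t → HasDerivAt v1 (v2 t) t)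
    (h3 : ContinuousOn v2 (Ioi 0)) : ContDiffOn ℝ 2 v (Ioi 0) := by
  have key : ∀ {f f1 : ℝ → ℝ} {n : ℕ}, (∀ t, 0 < t → HasDerivAt f (f1 t) t) →
      ContDiffOn ℝ n f1 (Ioi 0) → ContDiffOn ℝ (n + 1) f (Ioi 0) := by
    intro f f1 n hf hf1
    rw [contDiffOn_succ_iff_deriv_of_isOpen isOpen_Ioi]
    refine ⟨fun t ht => (hf t ht).differentiableAt.differentiableWithinAt, by simp, ?_⟩
    exact hf1.congr fun t ht => (hf t ht).deriv
  have a : ContDiffOn ℝ ((0:ℕ) + 1) v1 (Ioi 0) :=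
    key h2 (by simpa using (contDiffOn_zero (𝕜 := ℝ)).2 h3)
  have b : ContDiffOn ℝ ((1:ℕ) + 1) v (Ioi 0) := key h1 (by simpa using a)
  have e : ((1:ℕ) + 1 : WithTop ℕ∞) = 2 := by norm_num
  rwa [e] at b

lemma contDiffAt_comp_fund {N : ℕ} {v : ℝ → ℝ} (hv : ContDiffOn ℝ 2 v (Ioi 0))
    {x : EuclideanSpace ℝ (Fin N)} (hx : x ≠ 0) :
    ContDiffAt ℝ 2 (fun y : EuclideanSpace ℝ (Fin N) => v (‖y‖ ^ (2 - (N:ℝ)))) x := by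
  have h0 : 0 < ‖x‖ := norm_pos_iff.2 hx
  have ht : 0 < ‖x‖ ^ (2 - (N:ℝ)) := Real.rpow_pos_of_pos h0 _
  have hvT : ContDiffAt ℝ 2 v (‖x‖ ^ (2 - (N:ℝ))) := hv.contDiffAt (Ioi_mem_nhds ht)
  have hT : ContDiffAt ℝ 2 (fun y : EuclideanSpace ℝ (Fin N) => ‖y‖ ^ (2 - (N:ℝ))) x :=
    (contDiffAt_norm ℝ hx).rpow_const_of_ne h0.ne'
  exact ContDiffAt.comp (g := v) x hvT hT

/-- Comparison with radial functions on annuli. -/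
lemma comparison {N : ℕ} (hN : 3 ≤ N) {u : EuclideanSpace ℝ (Fin N) → ℝ}
    (hu : ContDiffOn ℝ 2 u {(0 : EuclideanSpace ℝ (Fin N))}ᶜ)
    {v v1 v2 : ℝ → ℝ} (h1 : ∀ t, 0 < t → HasDerivAt v (v1 t) t)
    (h2 : ∀ t, 0 < t → HasDerivAt v1 (v2 t) t) (h3 : ContinuousOn v2 (Ioi 0))
    {a b : ℝ} (ha : 0 < a)
    (hba : ∀ x, x ≠ 0 → ‖x‖ ^ (2 - (N:ℝ)) = a → v a ≤ u x)
    (hbb : ∀ x, x ≠ 0 → ‖x‖ ^ (2 - (N:ℝ)) = b → v b ≤ u x)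
    (hlap : ∀ x, x ≠ 0 → a < ‖x‖ ^ (2 - (N:ℝ)) → ‖x‖ ^ (2 - (N:ℝ)) < b →
      (∀ y, ‖y‖ = ‖x‖ → u x ≤ u y) →
      -(v2 (‖x‖ ^ (2 - (N:ℝ))) * ((N:ℝ) - 2) ^ 2 * ‖x‖ ^ (2 - 2 * (N:ℝ))) < -laplacian u x)
    (x : EuclideanSpace ℝ (Fin N)) (hx : x ≠ 0) (hxa : a ≤ ‖x‖ ^ (2 - (N:ℝ)))
    (hxb : ‖x‖ ^ (2 - (N:ℝ)) ≤ b) : v (‖x‖ ^ (2 - (N:ℝ))) ≤ u x := by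
  have hN' : (3:ℝ) ≤ N := by exact_mod_cast hN
  have hb : 0 < b := by linarith
  have hv := contDiffOn_two_of_hasDerivAt h1 h2 h3
  set T : EuclideanSpace ℝ (Fin N) → ℝ := fun y => ‖y‖ ^ (2 - (N:ℝ)) with hT
  have hneg : 2 - (N:ℝ) < 0 := by linarith
  -- radii
  set ra : ℝ := a ^ (2 - (N:ℝ))⁻¹ with hra
  set rb : ℝ := b ^ (2 - (N:ℝ))⁻¹ with hrb
  have ra0 : 0 < ra := Real.rpow_pos_of_pos ha _
  have rb0 : 0 < rb := Real.rpow_pos_of_pos hb _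
  have era : ra ^ (2 - (N:ℝ)) = a := Real.rpow_inv_rpow ha.le hneg.ne
  have erb : rb ^ (2 - (N:ℝ)) = b := Real.rpow_inv_rpow hb.le hneg.ne
  have cmp : ∀ {r s : ℝ}, 0 < r → 0 < s → (r ^ (2 - (N:ℝ)) ≤ s ^ (2 - (N:ℝ)) ↔ s ≤ r) :=
    fun hr hs => Real.rpow_le_rpow_iff_of_neg hr hs hneg
  set A : Set (EuclideanSpace ℝ (Fin N)) := closedBall 0 ra ∩ {y | rb ≤ ‖y‖} with hA
  have hAc : IsCompact A := (isCompact_closedBall 0 ra).inter_right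
    (isClosed_le continuous_const continuous_norm)
  have hA0 : ∀ y ∈ A, y ≠ 0 := by
    intro y hy h
    have := hy.2
    simp only [h, mem_ofPred_eq, norm_zero] at this
    linarith
  have hAT : ∀ y, y ≠ 0 → (y ∈ A ↔ a ≤ T y ∧ T y ≤ b) := by
    intro y hy
    have h0 : 0 < ‖y‖ := norm_pos_iff.2 hy
    have e1 := cmp ra0 h0
    have e2 := cmp h0 rb0
    rw [era] at e1
    rw [erb] at e2
    simp only [hA, mem_inter_iff, mem_closedBall_zero_iff, mem_ofPred_eq, hT, e1, e2]
  have hcd : ∀ y, y ≠ 0 → ContDiffAt ℝ 2 (fun z => u z - v (T z)) y := by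
    intro y hy
    exact (hu.contDiffAt (isOpen_compl_singleton.mem_nhds hy)).sub (contDiffAt_comp_fund hv hy)
  obtain ⟨x0, hx0A, hmin⟩ := hAc.exists_isMinOn ⟨x, (hAT x hx).2 ⟨hxa, hxb⟩⟩
    (f := fun z => u z - v (T z))
    (fun y hy => (hcd y (hA0 y hy)).continuousAt.continuousWithinAt)
  have hx0 := hA0 x0 hx0A
  have hle : ∀ y ∈ A, u x0 - v (T x0) ≤ u y - v (T y) := fun y hy => hmin hy
  suffices h : 0 ≤ u x0 - v (T x0) by
    have := hle x ((hAT x hx).2 ⟨hxa, hxb⟩)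
    change v (T x) ≤ u x
    linarith
  by_contra hlt
  push Not at hlt
  have hTx0 := (hAT x0 hx0).1 hx0A
  have ha' : a < T x0 := by
    refine lt_of_le_of_ne hTx0.1 fun h => ?_
    have := hba x0 hx0 h.symm
    rw [← h] at hlt
    linarith
  have hb' : T x0 < b := by
    refine lt_of_le_of_ne hTx0.2 fun h => ?_
    have := hbb x0 hx0 h
    rw [h] at hlt
    linarith
  have hmm : ∀ y, ‖y‖ = ‖x0‖ → u x0 ≤ u y := by
    intro y hy
    have e : T y = T x0 := by simp only [hT, hy]
    have hy0 : y ≠ 0 := by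
      rw [← norm_pos_iff, hy]; exact norm_pos_iff.2 hx0
    have := hle y ((hAT y hy0).2 (by rw [e]; exact hTx0))
    rw [e] at this
    linarith
  have hl := hlap x0 hx0 ha' hb' hmm
  have hTc : ContinuousAt T x0 :=
    continuousAt_id.norm.rpow_const (Or.inl (norm_pos_iff.2 hx0).ne')
  have hloc : IsLocalMin (fun z => u z - v (T z)) x0 := by
    filter_upwards [hTc.eventually (lt_mem_nhds ha'), hTc.eventually (gt_mem_nhds hb'),
      isOpen_compl_singleton.mem_nhds hx0] with y hy1 hy2 hy0
    exact hle y ((hAT y hy0).2 ⟨hy1.le, hy2.le⟩)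
  have h5 := laplacian_nonneg_of_isLocalMin (hcd x0 hx0) hloc
  rw [laplacian_sub (hu.contDiffAt (isOpen_compl_singleton.mem_nhds hx0))
    (contDiffAt_comp_fund hv hx0), laplacian_comp_fund hx0 h1 (h2 _ (by linarith))] at h5
  linarith

lemma exists_fund {N : ℕ} (hN : 3 ≤ N) {t : ℝ} (ht : 0 < t) :
    ∃ x : EuclideanSpace ℝ (Fin N), x ≠ 0 ∧ ‖x‖ ^ (2 - (N:ℝ)) = t := by
  have hN' : (3:ℝ) ≤ N := by exact_mod_cast hN
  have hneg : 2 - (N:ℝ) < 0 := by linarith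
  set r : ℝ := t ^ (2 - (N:ℝ))⁻¹ with hr
  have r0 : 0 < r := Real.rpow_pos_of_pos ht _
  have e : ‖EuclideanSpace.single (⟨0, by omega⟩ : Fin N) r‖ = r := by
    simp [abs_of_pos r0]
  refine ⟨EuclideanSpace.single ⟨0, by omega⟩ r, ?_, ?_⟩
  · rw [← norm_pos_iff, e]; exact r0
  · rw [e]; exact Real.rpow_inv_rpow ht.le hneg.ne

/-- Linear comparison: spherical minima of positive strictly superharmonic functions. -/
lemma min_bound {N : ℕ} (hN : 3 ≤ N) {u : EuclideanSpace ℝ (Fin N) → ℝ}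
    (hu : ContDiffOn ℝ 2 u {(0 : EuclideanSpace ℝ (Fin N))}ᶜ)
    (hpos : ∀ x, x ≠ 0 → 0 < u x) (hl : ∀ x, x ≠ 0 → 0 < -laplacian u x)
    {x1 : EuclideanSpace ℝ (Fin N)} (hx1 : x1 ≠ 0) (hT1 : ‖x1‖ ^ (2 - (N:ℝ)) = 1)
    {x : EuclideanSpace ℝ (Fin N)} (hx : x ≠ 0) (hm : ∀ y, ‖y‖ = ‖x‖ → u x ≤ u y) :
    u x ≤ u x1 * max 1 (‖x‖ ^ (2 - (N:ℝ))) := by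
  have hN' : (3:ℝ) ≤ N := by exact_mod_cast hN
  have hneg : 2 - (N:ℝ) < 0 := by linarith
  set t := ‖x‖ ^ (2 - (N:ℝ)) with ht
  have ht0 : 0 < t := Real.rpow_pos_of_pos (norm_pos_iff.2 hx) _
  have hux := hpos x hx
  have hu1 := hpos x1 hx1
  have hm' : ∀ y : EuclideanSpace ℝ (Fin N), y ≠ 0 → ‖y‖ ^ (2 - (N:ℝ)) = t → u x ≤ u y := by
    intro y hy h
    exact hm y ((Real.rpow_left_inj (norm_nonneg y) (norm_nonneg x) hneg.ne).1 h)
  have lin : ∀ (k d : ℝ) {a b : ℝ}, 0 < a → a ≤ 1 → 1 ≤ b →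
      (∀ y : EuclideanSpace ℝ (Fin N), y ≠ 0 → ‖y‖ ^ (2 - (N:ℝ)) = a → k * a + d ≤ u y) →
      (∀ y : EuclideanSpace ℝ (Fin N), y ≠ 0 → ‖y‖ ^ (2 - (N:ℝ)) = b → k * b + d ≤ u y) →
      k + d ≤ u x1 := by
    intro k d a b ha ha1 hb1 h1 h2
    have := comparison hN hu (v := fun t => k * t + d) (v1 := fun _ => k) (v2 := fun _ => 0)
      (a := a) (b := b)
      (fun t _ => by simpa using ((hasDerivAt_id t).const_mul k).add_const d)
      (fun t _ => hasDerivAt_const _ _) continuousOn_const ha h1 h2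
      (fun y hy _ _ _ => by simpa using hl y hy) x1 hx1 (by rw [hT1]; exact ha1)
      (by rw [hT1]; exact hb1)
    rw [hT1] at this
    simpa using this
  rcases le_total t 1 with h | h
  · rw [max_eq_left h, mul_one]
    by_contra hlt
    push Not at hlt
    have key : ∀ b, 1 < b → u x * (b - 1) ≤ u x1 * (b - t) := by
      intro b hb
      have hbt : 0 < b - t := by linarith
      have := lin (-(u x / (b - t))) (u x / (b - t) * b) ht0 h hb.le
        (fun y hy hyt => by
          have := hm' y hy hyt
          have e : -(u x / (b - t)) * t + u x / (b - t) * b = u x := by field_simp; ring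
          rw [e]; exact this)
        (fun y hy _ => by
          have := hpos y hy
          have e : -(u x / (b - t)) * b + u x / (b - t) * b = 0 := by ring
          rw [e]; exact this.le)
      have e : -(u x / (b - t)) + u x / (b - t) * b = u x * (b - 1) / (b - t) := by
        field_simp; ring
      rw [e, div_le_iff₀ hbt] at this
      exact this
    have hd : 0 < u x - u x1 := by linarith
    have hb := key (1 + (u x / (u x - u x1)) + 1) (by
      have : 0 < u x / (u x - u x1) := by positivity
      linarith)
    have e : u x / (u x - u x1) * (u x - u x1) = u x := by field_simp
    nlinarith [mul_pos hu1 ht0]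
  · rw [max_eq_right h]
    have key : ∀ a, 0 < a → a < 1 → u x * (1 - a) ≤ u x1 * (t - a) := by
      intro a ha ha1
      have hbt : 0 < t - a := by linarith
      have := lin ((u x / (t - a))) (-(u x / (t - a) * a)) ha ha1.le h
        (fun y hy _ => by
          have := hpos y hy
          have e : (u x / (t - a)) * a + -(u x / (t - a) * a) = 0 := by ring
          rw [e]; exact this.le)
        (fun y hy hyt => by
          have := hm' y hy hyt
          have e : (u x / (t - a)) * t + -(u x / (t - a) * a) = u x := by field_simp; ring
          rw [e]; exact this)
      have e : (u x / (t - a)) + -(u x / (t - a) * a) = u x * (1 - a) / (t - a) := by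
        field_simp; ring
      rw [e, div_le_iff₀ hbt] at this
      exact this
    have l1 : Tendsto (fun a : ℝ => u x * (1 - a)) (nhdsWithin 0 (Ioi 0)) (nhds (u x * (1 - 0))) :=
      (Continuous.tendsto (by fun_prop) 0).mono_left nhdsWithin_le_nhds
    have l2 : Tendsto (fun a : ℝ => u x1 * (t - a)) (nhdsWithin 0 (Ioi 0)) (nhds (u x1 * (t - 0))) :=
      (Continuous.tendsto (by fun_prop) 0).mono_left nhdsWithin_le_nhds
    have := le_of_tendsto_of_tendsto l1 l2 (by
      filter_upwards [Ioo_mem_nhdsGT (zero_lt_one (α := ℝ))] with a ha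
      exact key a ha.1 ha.2)
    simpa using this

lemma necessity_beta {N : ℕ} (hN : 3 ≤ N) (p : ℝ) (hp : 0 < p) (β : ℝ) (φ : ℝ → ℝ)
    (hφpos : ∀ r : ℝ, 0 < r → 0 < φ r) (c₁ : ℝ) (hc₁ : 0 < c₁)
    (hβ : ∀ r : ℝ, 1 < r → c₁ * r ^ β ≤ φ r)
    (u : EuclideanSpace ℝ (Fin N) → ℝ) (hu : IsSol φ p u) : β < -2 := by
  by_contra hcon
  push Not at hcon
  have hN' : (3:ℝ) ≤ N := by exact_mod_cast hN
  have hneg : 2 - (N:ℝ) < 0 := by linarith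
  obtain ⟨hu2, hsol⟩ := hu
  have hpos : ∀ x, x ≠ 0 → 0 < u x := fun x hx => (hsol x hx).1
  have hl : ∀ x, x ≠ 0 → 0 < -laplacian u x := fun x hx => by
    rw [(hsol x hx).2]
    exact mul_pos (hφpos _ (norm_pos_iff.2 hx)) (Real.rpow_pos_of_pos (hpos x hx) _)
  obtain ⟨x1, hx1, hT1⟩ := exists_fund hN (zero_lt_one (α := ℝ))
  obtain ⟨x2, hx2, hT2⟩ := exists_fund hN (show (0:ℝ) < 1 / 2 by norm_num)
  set M := u x1 with hM
  have hM0 : 0 < M := hpos x1 hx1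
  have hMp : 0 < M ^ (-p) := Real.rpow_pos_of_pos hM0 _
  set κ : ℝ := c₁ * M ^ (-p) / (2 * ((N:ℝ) - 2) ^ 2) with hκ
  have hn2 : 0 < ((N:ℝ) - 2) ^ 2 := by
    have : 0 < (N:ℝ) - 2 := by linarith
    positivity
  have hκ0 : 0 < κ := by positivity
  have hκ' : κ * ((N:ℝ) - 2) ^ 2 < c₁ * M ^ (-p) := by
    have : κ * ((N:ℝ) - 2) ^ 2 = c₁ * M ^ (-p) / 2 := by
      have hne : (N:ℝ) - 2 ≠ 0 := by intro h; linarith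
      rw [hκ]; field_simp
    rw [this]
    have : 0 < c₁ * M ^ (-p) := by positivity
    linarith
  have key : ∀ ε : ℝ, 0 < ε → ε < 1 / 2 → κ * (-Real.log 2 + (-Real.log ε) / 2) ≤ u x2 := by
    intro ε hε hε2
    set L : ℝ := (-Real.log ε) / (1 - ε) with hL
    have hlog : 0 < -Real.log ε := by
      have := Real.log_neg hε (by linarith)
      linarith
    have hLe : -Real.log ε ≤ L := by
      rw [hL, le_div_iff₀ (by linarith)]
      nlinarith
    have hz : Real.log ε + L * (1 - ε) = 0 := by
      have : (1 - ε) ≠ 0 := by linarith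
      rw [hL]; field_simp; ring
    have := comparison hN hu2 (v := fun t => κ * (Real.log t + L * (1 - t)))
      (v1 := fun t => κ * (t⁻¹ + L * (-1))) (v2 := fun t => κ * (-(t ^ 2)⁻¹)) (a := ε) (b := 1)
      (fun t ht => ((Real.hasDerivAt_log ht.ne').add
        (((hasDerivAt_id t).const_sub 1).const_mul L)).const_mul κ)
      (fun t ht => by
        simpa using ((hasDerivAt_inv ht.ne').add_const (L * (-1))).const_mul κ)
      (by
        refine continuousOn_const.mul (ContinuousOn.neg (ContinuousOn.inv₀ (by fun_prop) ?_))
        intro t ht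
        have : (0:ℝ) < t := ht
        positivity)
      hε
      (fun x hx _ => by
        simp only [hz, mul_zero]; exact (hpos x hx).le)
      (fun x hx _ => by
        simp; exact (hpos x hx).le)
      (by
        intro x hx hx1 hx2 hm
        have hb := min_bound hN hu2 hpos hl ‹x1 ≠ 0› hT1 hx hm
        rw [max_eq_left hx2.le, mul_one] at hb
        have hr0 : 0 < ‖x‖ := norm_pos_iff.2 hx
        have hr1 : 1 < ‖x‖ := by
          by_contra h
          push Not at h
          have := Real.one_le_rpow_of_pos_of_le_one_of_nonpos hr0 h hneg.le
          linarith
        rw [(hsol x hx).2]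
        have e1 : -(κ * (-((‖x‖ ^ (2 - (N:ℝ))) ^ 2)⁻¹) * ((N:ℝ) - 2) ^ 2 * ‖x‖ ^ (2 - 2 * (N:ℝ)))
            = κ * ((N:ℝ) - 2) ^ 2 * ‖x‖ ^ (-2 : ℝ) := by
          have : ‖x‖ ^ (-2 : ℝ) = ((‖x‖ ^ (2 - (N:ℝ))) ^ 2)⁻¹ * ‖x‖ ^ (2 - 2 * (N:ℝ)) := by
            rw [← Real.rpow_natCast, ← Real.rpow_mul hr0.le, ← Real.rpow_neg hr0.le,
              ← Real.rpow_add hr0]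
            congr 1; push_cast; ring
          rw [this]; ring
        rw [e1]
        have hr2 : 0 < ‖x‖ ^ (-2:ℝ) := Real.rpow_pos_of_pos hr0 _
        calc κ * ((N:ℝ) - 2) ^ 2 * ‖x‖ ^ (-2 : ℝ) < c₁ * M ^ (-p) * ‖x‖ ^ (-2 : ℝ) := by
              exact mul_lt_mul_of_pos_right hκ' hr2
          _ = (c₁ * ‖x‖ ^ (-2 : ℝ)) * M ^ (-p) := by ring
          _ ≤ (c₁ * ‖x‖ ^ β) * M ^ (-p) := by
              have := Real.rpow_le_rpow_of_exponent_le hr1.le hcon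
              gcongr
          _ ≤ φ ‖x‖ * u x ^ (-p) := by
              have h1 := Real.rpow_le_rpow_of_nonpos (hpos x hx) hb (by linarith : -p ≤ 0)
              exact mul_le_mul (hβ _ hr1) h1 hMp.le (hφpos _ hr0).le)
      x2 hx2 (by rw [hT2]; exact hε2.le) (by rw [hT2]; norm_num)
    rw [hT2] at this
    refine le_trans ?_ this
    have e : Real.log (1 / 2) = - Real.log 2 := by rw [one_div, Real.log_inv]
    simp only [e]
    apply mul_le_mul_of_nonneg_left _ hκ0.le
    linarith
  -- contradiction
  have hlim : Tendsto (fun ε : ℝ => κ * (-Real.log 2 + (-Real.log ε) / 2)) (nhdsWithin 0 (Ioi 0))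
      atTop := by
    apply Tendsto.const_mul_atTop hκ0
    apply tendsto_atTop_add_const_left
    exact (tendsto_neg_atBot_atTop.comp Real.tendsto_log_nhdsGT_zero).atTop_div_const (by norm_num)
  obtain ⟨ε, h1, h2, h3⟩ := ((hlim.eventually (eventually_gt_atTop (u x2))).and
    ((Ioo_mem_nhdsGT (show (0:ℝ) < 1 / 2 by norm_num)))).exists
  have := key ε h2 h3
  linarith

lemma necessity_alpha {N : ℕ} (hN : 3 ≤ N) (p : ℝ) (hp : 0 < p) (α : ℝ) (φ : ℝ → ℝ)
    (hφpos : ∀ r : ℝ, 0 < r → 0 < φ r) (c₁ : ℝ) (hc₁ : 0 < c₁)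
    (hα : ∀ r : ℝ, 0 < r → r < 1 → c₁ * r ^ α ≤ φ r)
    (u : EuclideanSpace ℝ (Fin N) → ℝ) (hu : IsSol φ p u) :
    0 < (N:ℝ) + α + p * ((N:ℝ) - 2) := by
  by_contra hcon
  push Not at hcon
  have hN' : (3:ℝ) ≤ N := by exact_mod_cast hN
  have hneg : 2 - (N:ℝ) < 0 := by linarith
  obtain ⟨hu2, hsol⟩ := hu
  have hpos : ∀ x, x ≠ 0 → 0 < u x := fun x hx => (hsol x hx).1
  have hl : ∀ x, x ≠ 0 → 0 < -laplacian u x := fun x hx => by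
    rw [(hsol x hx).2]
    exact mul_pos (hφpos _ (norm_pos_iff.2 hx)) (Real.rpow_pos_of_pos (hpos x hx) _)
  obtain ⟨x1, hx1, hT1⟩ := exists_fund hN (zero_lt_one (α := ℝ))
  obtain ⟨x2, hx2, hT2⟩ := exists_fund hN (show (0:ℝ) < 2 by norm_num)
  set M := u x1 with hM
  have hM0 : 0 < M := hpos x1 hx1
  have hMp : 0 < M ^ (-p) := Real.rpow_pos_of_pos hM0 _
  set κ : ℝ := c₁ * M ^ (-p) / (2 * ((N:ℝ) - 2) ^ 2) with hκ
  have hn2 : 0 < ((N:ℝ) - 2) ^ 2 := by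
    have : 0 < (N:ℝ) - 2 := by linarith
    positivity
  have hκ0 : 0 < κ := by positivity
  have hκ' : κ * ((N:ℝ) - 2) ^ 2 < c₁ * M ^ (-p) := by
    have : κ * ((N:ℝ) - 2) ^ 2 = c₁ * M ^ (-p) / 2 := by
      have hne : (N:ℝ) - 2 ≠ 0 := by intro h; linarith
      rw [hκ]; field_simp
    rw [this]
    have : 0 < c₁ * M ^ (-p) := by positivity
    linarith
  have key : ∀ b : ℝ, 2 < b → κ * (-(2 * Real.log 2) + Real.log b) ≤ u x2 := by
    intro b hb
    set L : ℝ := b * Real.log b / (b - 1) with hL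
    have hlog : 0 < Real.log b := Real.log_pos (by linarith)
    have hLe : Real.log b ≤ L := by
      rw [hL, le_div_iff₀ (by linarith)]
      nlinarith
    have hz : -(b * Real.log b) + L * (b - 1) = 0 := by
      have : (b - 1) ≠ 0 := by linarith
      rw [hL]; field_simp; ring
    have := comparison hN hu2 (v := fun t => κ * (-(t * Real.log t) + L * (t - 1)))
      (v1 := fun t => κ * (-(Real.log t + 1) + L * 1)) (v2 := fun t => κ * (-t⁻¹)) (a := 1) (b := b)
      (fun t ht => ((Real.hasDerivAt_mul_log ht.ne').neg.add
        (((hasDerivAt_id t).sub_const 1).const_mul L)).const_mul κ)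
      (fun t ht => by
        simpa using (((Real.hasDerivAt_log ht.ne').add_const 1).neg.add_const (L * 1)).const_mul κ)
      (by
        refine continuousOn_const.mul (ContinuousOn.neg (ContinuousOn.inv₀ (by fun_prop) ?_))
        intro t ht
        have : (0:ℝ) < t := ht
        positivity)
      one_pos
      (fun x hx _ => by
        simp; exact (hpos x hx).le)
      (fun x hx _ => by
        simp only [hz, mul_zero]; exact (hpos x hx).le)
      (by
        intro x hx hx1 hx2 hm
        have hb := min_bound hN hu2 hpos hl ‹x1 ≠ 0› hT1 hx hm
        rw [max_eq_right hx1.le] at hb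
        have hr0 : 0 < ‖x‖ := norm_pos_iff.2 hx
        have hr1 : ‖x‖ < 1 := by
          by_contra h
          push Not at h
          have := Real.rpow_le_one_of_one_le_of_nonpos h hneg.le
          linarith
        rw [(hsol x hx).2]
        have e1 : -(κ * (-(‖x‖ ^ (2 - (N:ℝ)))⁻¹) * ((N:ℝ) - 2) ^ 2 * ‖x‖ ^ (2 - 2 * (N:ℝ)))
            = κ * ((N:ℝ) - 2) ^ 2 * ‖x‖ ^ (-(N:ℝ)) := by
          have : ‖x‖ ^ (-(N:ℝ)) = (‖x‖ ^ (2 - (N:ℝ)))⁻¹ * ‖x‖ ^ (2 - 2 * (N:ℝ)) := by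
            rw [← Real.rpow_neg hr0.le, ← Real.rpow_add hr0]
            congr 1; ring
          rw [this]; ring
        rw [e1]
        have hr2 : 0 < ‖x‖ ^ (-(N:ℝ)) := Real.rpow_pos_of_pos hr0 _
        have hT0 : 0 < ‖x‖ ^ (2 - (N:ℝ)) := Real.rpow_pos_of_pos hr0 _
        have e2 : ‖x‖ ^ α * (‖x‖ ^ (2 - (N:ℝ))) ^ (-p) = ‖x‖ ^ (α + p * ((N:ℝ) - 2)) := by
          rw [← Real.rpow_mul hr0.le, ← Real.rpow_add hr0]
          congr 1; ring
        calc κ * ((N:ℝ) - 2) ^ 2 * ‖x‖ ^ (-(N:ℝ)) < c₁ * M ^ (-p) * ‖x‖ ^ (-(N:ℝ)) := by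
              exact mul_lt_mul_of_pos_right hκ' hr2
          _ ≤ c₁ * M ^ (-p) * ‖x‖ ^ (α + p * ((N:ℝ) - 2)) := by
              have := Real.rpow_le_rpow_of_exponent_ge hr0 hr1.le
                (by linarith : α + p * ((N:ℝ) - 2) ≤ -(N:ℝ))
              gcongr
          _ = (c₁ * ‖x‖ ^ α) * (M * ‖x‖ ^ (2 - (N:ℝ))) ^ (-p) := by
              rw [← e2, Real.mul_rpow hM0.le hT0.le]; ring
          _ ≤ φ ‖x‖ * u x ^ (-p) := by
              have h1 := Real.rpow_le_rpow_of_nonpos (hpos x hx) hb (by linarith : -p ≤ 0)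
              exact mul_le_mul (hα _ hr0 hr1) h1 (by positivity) (hφpos _ hr0).le)
      x2 hx2 (by rw [hT2]; norm_num) (by rw [hT2]; exact hb.le)
    rw [hT2] at this
    refine le_trans ?_ this
    apply mul_le_mul_of_nonneg_left _ hκ0.le
    linarith
  have hlim : Tendsto (fun b : ℝ => κ * (-(2 * Real.log 2) + Real.log b)) atTop atTop := by
    apply Tendsto.const_mul_atTop hκ0
    apply tendsto_atTop_add_const_left
    exact Real.tendsto_log_atTop
  obtain ⟨b, h1, h2⟩ := ((hlim.eventually (eventually_gt_atTop (u x2))).and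
    (eventually_gt_atTop 2)).exists
  have := key b h2
  linarith

/-- Green representation on the half-line. -/
lemma green {h : ℝ → ℝ} (hc : ContinuousOn h (Ioi 0))
    (hI : IntegrableOn (fun s => min s 1 * h s) (Ioi 0)) :
    ∃ v1 : ℝ → ℝ, (∀ t, 0 < t → HasDerivAt (fun t => ∫ s in Ioi (0:ℝ), min s t * h s) (v1 t) t) ∧
      ∀ t, 0 < t → HasDerivAt v1 (-h t) t := by
  have hIoi : ∀ t, 0 < t → IntegrableOn h (Ioi t) := by
    intro t ht
    have hsub : Ioi t ⊆ Ioi 0 := Ioi_subset_Ioi ht.le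
    have hm : 0 < min t 1 := lt_min ht one_pos
    refine Integrable.mono ((hI.mono_set hsub).const_mul (min t 1)⁻¹)
      ((hc.mono hsub).aestronglyMeasurable measurableSet_Ioi) ?_
    filter_upwards [ae_restrict_mem measurableSet_Ioi] with s hs
    have hs' : t < s := hs
    have hle : min t 1 ≤ min s 1 := min_le_min_right 1 hs'.le
    have hm2 : 0 < min s 1 := hm.trans_le hle
    rw [norm_mul, norm_mul, Real.norm_of_nonneg hm2.le, Real.norm_of_nonneg (inv_pos.2 hm).le,
      ← mul_assoc]
    refine le_mul_of_one_le_left (norm_nonneg _) ?_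
    rw [inv_mul_eq_div, le_div_iff₀ hm]
    linarith
  have hIoc : ∀ t, 0 < t → IntegrableOn (fun s => s * h s) (Ioc 0 t) := by
    intro t ht
    have hsub : Ioc 0 t ⊆ Ioi 0 := Ioc_subset_Ioi_self
    have hcs : ContinuousOn (fun s => s * h s) (Ioc 0 t) := continuousOn_id.mul (hc.mono hsub)
    refine Integrable.mono ((hI.mono_set hsub).const_mul (max t 1))
      (hcs.aestronglyMeasurable measurableSet_Ioc) ?_
    filter_upwards [ae_restrict_mem measurableSet_Ioc] with s hs
    have hs0 : 0 < s := hs.1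
    have hst : s ≤ t := hs.2
    have hm2 : 0 < min s 1 := lt_min hs0 one_pos
    have hM : 0 < max t 1 := lt_max_of_lt_left ht
    rw [norm_mul, norm_mul, norm_mul, Real.norm_of_nonneg hm2.le, Real.norm_of_nonneg hM.le,
      Real.norm_of_nonneg hs0.le, ← mul_assoc]
    refine mul_le_mul_of_nonneg_right ?_ (norm_nonneg _)
    rcases le_total s 1 with h1 | h1
    · rw [min_eq_left h1]
      exact le_mul_of_one_le_left hs0.le (le_max_right _ _)
    · rw [min_eq_right h1, mul_one]
      exact hst.trans (le_max_left _ _)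
  have hev : ∀ t, 0 < t → (∫ s in Ioi (0:ℝ), min s t * h s)
      = (∫ s in (0:ℝ)..t, s * h s) + t * ((∫ s in Ioi (1:ℝ), h s) - ∫ s in (1:ℝ)..t, h s) := by
    intro t ht
    have e1 : (∫ s in Ioi (1:ℝ), h s) - ∫ s in (1:ℝ)..t, h s = ∫ s in Ioi t, h s := by
      rw [← intervalIntegral.integral_Ioi_sub_Ioi' (hIoi 1 one_pos) (hIoi t ht)]
      ring
    have f1 : EqOn (fun s => min s t * h s) (fun s => s * h s) (Ioc 0 t) := by
      intro s hs
      simp only [min_eq_left hs.2]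
    have f2 : EqOn (fun s => min s t * h s) (fun s => t * h s) (Ioi t) := by
      intro s hs
      have : t < s := hs
      simp only [min_eq_right this.le]
    rw [e1, ← Ioc_union_Ioi_eq_Ioi ht.le, setIntegral_union (Ioc_disjoint_Ioi le_rfl)
      measurableSet_Ioi ((hIoc t ht).congr_fun f1.symm measurableSet_Ioc)
      (IntegrableOn.congr_fun ((hIoi t ht).const_mul t) f2.symm measurableSet_Ioi),
      setIntegral_congr_fun measurableSet_Ioc f1, setIntegral_congr_fun measurableSet_Ioi f2,
      intervalIntegral.integral_of_le ht.le, integral_const_mul]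
  have hcat : ∀ t, 0 < t → ContinuousAt h t := fun t ht => hc.continuousAt (Ioi_mem_nhds ht)
  have hD : ∀ t, 0 < t → HasDerivAt (fun t => ∫ s in (1:ℝ)..t, h s) (h t) t := by
    intro t ht
    apply intervalIntegral.integral_hasDerivAt_right
    · apply ContinuousOn.intervalIntegrable
      apply hc.mono
      intro s hs
      exact lt_of_lt_of_le (lt_min one_pos ht) hs.1
    · exact hc.stronglyMeasurableAtFilter isOpen_Ioi t ht
    · exact hcat t ht
  have hD2 : ∀ t, 0 < t → HasDerivAt (fun t => ∫ s in (0:ℝ)..t, s * h s) (t * h t) t := by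
    intro t ht
    apply intervalIntegral.integral_hasDerivAt_right (f := fun s => s * h s)
    · rw [intervalIntegrable_iff_integrableOn_Ioc_of_le ht.le]
      exact hIoc t ht
    · exact (continuousOn_id.mul hc).stronglyMeasurableAtFilter isOpen_Ioi t ht
    · exact continuousAt_id.mul (hcat t ht)
  refine ⟨fun t => (∫ s in Ioi (1:ℝ), h s) - ∫ s in (1:ℝ)..t, h s, ?_, ?_⟩
  · intro t ht
    have hd := (hD2 t ht).add ((hasDerivAt_id t).mul ((hD t ht).const_sub (∫ s in Ioi (1:ℝ), h s)))
    have e : t * h t + (1 * ((∫ s in Ioi (1:ℝ), h s) - ∫ s in (1:ℝ)..t, h s) + id t * -h t)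
        = (∫ s in Ioi (1:ℝ), h s) - ∫ s in (1:ℝ)..t, h s := by simp
    rw [e] at hd
    refine hd.congr_of_eventuallyEq ?_
    filter_upwards [lt_mem_nhds ht] with y hy
    rw [hev y hy]
    rfl
  · intro t ht
    exact (hD t ht).const_sub _

lemma rpow_lip {p l x y : ℝ} (hp : 0 < p) (hl : 1 ≤ l) (hx : l ≤ x) (hy : l ≤ y) :
    |x ^ (-p) - y ^ (-p)| ≤ p / l * |x - y| := by
  have l0 : 0 < l := by linarith
  have := (convex_Ici l).norm_image_sub_le_of_norm_hasDerivWithin_le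
    (f := fun z : ℝ => z ^ (-p)) (f' := fun z : ℝ => -p * z ^ (-p - 1)) (C := p / l)
    (fun z hz => by
      have : l ≤ z := hz
      exact (Real.hasDerivAt_rpow_const (Or.inl (by linarith : z ≠ 0) )).hasDerivWithinAt)
    (fun z hz => by
      have hz : l ≤ z := hz
      have hz0 : 0 < z := by linarith
      have hz1 : 1 ≤ z := by linarith
      rw [norm_mul, norm_neg, Real.norm_of_nonneg hp.le,
        Real.norm_of_nonneg (Real.rpow_nonneg hz0.le _), div_eq_mul_inv]
      refine mul_le_mul_of_nonneg_left ?_ hp.le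
      calc z ^ (-p - 1) ≤ z ^ (-1 : ℝ) :=
            Real.rpow_le_rpow_of_exponent_le hz1 (by linarith)
        _ = z⁻¹ := Real.rpow_neg_one z
        _ ≤ l⁻¹ := inv_anti₀ l0 hz)
    hy hx
  simpa using this

lemma ode_exists {p : ℝ} (hp : 0 < p) {W : ℝ → ℝ} (hWc : ContinuousOn W (Ioi 0))
    (hW0 : ∀ s, 0 < s → 0 ≤ W s)
    (hI : IntegrableOn (fun s => min s 1 * (W s * (1 + s) ^ (-p))) (Ioi 0)) :
    ∃ v v1 : ℝ → ℝ, (∀ t, 0 < t → 0 < v t) ∧ (∀ t, 0 < t → HasDerivAt v (v1 t) t) ∧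
      ∀ t, 0 < t → HasDerivAt v1 (-(W t * v t ^ (-p))) t := by
  set w : ℝ → ℝ := fun s => W s * (1 + s) ^ (-p) with hw
  have hwc : ContinuousOn w (Ioi 0) := by
    refine hWc.mul (ContinuousOn.rpow_const (by fun_prop) ?_)
    intro s hs
    have : (0:ℝ) < s := hs
    left; positivity
  have hw0 : ∀ s, 0 < s → 0 ≤ w s := fun s hs => mul_nonneg (hW0 s hs) (by positivity)
  set B : ℝ → ℝ := fun s => min s 1 * w s with hB
  set I : ℝ := ∫ s in Ioi (0:ℝ), B s with hIdef
  have hB0 : ∀ s, 0 < s → 0 ≤ B s := fun s hs => mul_nonneg (le_min hs.le one_pos.le) (hw0 s hs)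
  have hI0 : 0 ≤ I := setIntegral_nonneg measurableSet_Ioi fun s hs => hB0 s hs
  set l : ℝ := 1 + 2 * p * I with hl
  have hl1 : 1 ≤ l := by have : 0 ≤ 2 * p * I := by positivity
                         linarith
  have hl0 : 0 < l := by linarith
  have hpl : p / l * I ≤ 1 / 2 := by
    rw [div_mul_eq_mul_div, div_le_iff₀ hl0]
    linarith
  -- the kernel
  set k : ℝ → ℝ → ℝ := fun t s => min s (max t 0) / (1 + max t 0) with hk
  have hk0 : ∀ t s, 0 < s → 0 ≤ k t s := by
    intro t s hs
    have : 0 ≤ max t 0 := le_max_right _ _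
    exact div_nonneg (le_min hs.le this) (by linarith)
  have hk1 : ∀ t s, 0 < s → k t s ≤ min s 1 := by
    intro t s hs
    have h0 : 0 ≤ max t 0 := le_max_right _ _
    simp only [hk]
    rw [div_le_iff₀ (by linarith)]
    rcases le_total s 1 with h1 | h1
    · rw [min_eq_left h1]
      refine (min_le_left _ _).trans ?_
      nlinarith
    · rw [min_eq_right h1]
      refine (min_le_right _ _).trans ?_
      linarith
  have hkt : ∀ s, Continuous fun t => k t s := by
    intro s
    refine Continuous.div (by fun_prop) (by fun_prop) ?_
    intro t
    have h0 : 0 ≤ max t 0 := le_max_right _ _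
    positivity
  have hks : ∀ t, Continuous fun s => k t s := by
    intro t
    simp only [hk]
    fun_prop
  set Q : (ℝ → ℝ) → ℝ → ℝ := fun g s => (max l (g s)) ^ (-p) with hQ
  have hQ0 : ∀ g s, 0 ≤ Q g s := fun g s =>
    Real.rpow_nonneg (hl0.le.trans (le_max_left _ _)) _
  have hQ1 : ∀ g s, Q g s ≤ 1 := fun g s =>
    Real.rpow_le_one_of_one_le_of_nonpos (hl1.trans (le_max_left _ _)) (by linarith)
  have hQc : ∀ g : ℝ → ℝ, Continuous g → Continuous (Q g) := by
    intro g hg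
    refine Continuous.rpow_const (by fun_prop) fun s => ?_
    left
    exact (lt_of_lt_of_le hl0 (le_max_left _ _)).ne'
  set F : (ℝ → ℝ) → ℝ → ℝ → ℝ := fun g t s => k t s * (w s * Q g s) with hF
  have hFm : ∀ g : ℝ → ℝ, Continuous g → ∀ t,
      AEStronglyMeasurable (F g t) (volume.restrict (Ioi 0)) := by
    intro g hg t
    exact ((hks t).continuousOn.mul (hwc.mul (hQc g hg).continuousOn)).aestronglyMeasurable
      measurableSet_Ioi
  have hF0 : ∀ g t s, 0 < s → 0 ≤ F g t s := fun g t s hs =>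
    mul_nonneg (hk0 t s hs) (mul_nonneg (hw0 s hs) (hQ0 g s))
  have hFB : ∀ g t s, 0 < s → F g t s ≤ B s := by
    intro g t s hs
    refine mul_le_mul (hk1 t s hs) ?_ (mul_nonneg (hw0 s hs) (hQ0 g s)) (le_min hs.le one_pos.le)
    exact mul_le_of_le_one_right (hw0 s hs) (hQ1 g s)
  have hFb : ∀ g t, ∀ᵐ s ∂(volume.restrict (Ioi (0:ℝ))), ‖F g t s‖ ≤ B s := by
    intro g t
    filter_upwards [ae_restrict_mem measurableSet_Ioi] with s hs
    rw [Real.norm_of_nonneg (hF0 g t s hs)]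
    exact hFB g t s hs
  have hFi : ∀ g : ℝ → ℝ, Continuous g → ∀ t, IntegrableOn (F g t) (Ioi 0) := fun g hg t =>
    Integrable.mono' hI (hFm g hg t) (hFb g t)
  set J : (ℝ → ℝ) → ℝ → ℝ := fun g t => l + ∫ s in Ioi (0:ℝ), F g t s with hJ
  have hJc : ∀ g : ℝ → ℝ, Continuous g → Continuous (J g) := by
    intro g hg
    refine continuous_const.add (continuous_of_dominated (hFm g hg) (hFb g) hI ?_)
    exact Eventually.of_forall fun s => (hkt s).mul continuous_const
  have hJb : ∀ g : ℝ → ℝ, ∀ t, ‖J g t‖ ≤ l + I := by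
    intro g t
    refine (norm_add_le _ _).trans ?_
    rw [Real.norm_of_nonneg hl0.le]
    gcongr
    exact norm_integral_le_of_norm_le hI (hFb g t)
  set Φ : BoundedContinuousFunction ℝ ℝ → BoundedContinuousFunction ℝ ℝ := fun g =>
    BoundedContinuousFunction.ofNormedAddCommGroup (J g) (hJc g g.continuous) (l + I) (hJb g) with hΦ
  have hcontr : ContractingWith (1 / 2) Φ := by
    refine ⟨by rw [← NNReal.coe_lt_coe]; norm_num, LipschitzWith.of_dist_le_mul fun f g => ?_⟩
    have hd : 0 ≤ dist f g := dist_nonneg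
    rw [BoundedContinuousFunction.dist_le (by positivity)]
    intro t
    have e : dist (Φ f t) (Φ g t) = ‖∫ s in Ioi (0:ℝ), (F f t s - F g t s)‖ := by
      rw [integral_sub (hFi f f.continuous t) (hFi g g.continuous t), Real.dist_eq, Real.norm_eq_abs]
      congr 1
      change (l + _) - (l + _) = _
      ring
    rw [e]
    have b : ‖∫ s in Ioi (0:ℝ), (F f t s - F g t s)‖
        ≤ ∫ s in Ioi (0:ℝ), (p / l * dist f g) * B s := by
      refine norm_integral_le_of_norm_le (hI.const_mul _) ?_
      filter_upwards [ae_restrict_mem measurableSet_Ioi] with s hs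
      have hs0 : 0 < s := hs
      have e2 : F f t s - F g t s = k t s * w s * (Q f s - Q g s) := by
        simp only [hF]; ring
      rw [e2, norm_mul, Real.norm_of_nonneg (mul_nonneg (hk0 t s hs0) (hw0 s hs0)),
        Real.norm_eq_abs, mul_comm]
      have q1 : |Q f s - Q g s| ≤ p / l * dist f g := by
        refine (rpow_lip hp hl1 (le_max_left _ _) (le_max_left _ _)).trans ?_
        have : |max l (f s) - max l (g s)| ≤ dist f g := by
          refine le_trans ?_ (BoundedContinuousFunction.dist_coe_le_dist s)
          rw [Real.dist_eq, max_comm l, max_comm l]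
          exact abs_max_sub_max_le_abs _ _ _
        gcongr
      refine mul_le_mul q1 (mul_le_mul_of_nonneg_right (hk1 t s hs0) (hw0 s hs0))
        (mul_nonneg (hk0 t s hs0) (hw0 s hs0)) (by positivity)
    refine b.trans ?_
    rw [integral_const_mul]
    calc p / l * dist f g * I = (p / l * I) * dist f g := by ring
      _ ≤ 1 / 2 * dist f g := by gcongr
      _ = _ := by norm_num
  set g := ContractingWith.fixedPoint Φ hcontr with hg
  have hfix : Φ g = g := hcontr.fixedPoint_isFixedPt
  have hgt : ∀ t, g t = l + ∫ s in Ioi (0:ℝ), F g t s := by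
    intro t
    have : Φ g t = g t := by rw [hfix]
    exact this.symm
  have hgl : ∀ t, l ≤ g t := by
    intro t
    rw [hgt t]
    have := setIntegral_nonneg (μ := volume) measurableSet_Ioi fun s (hs : s ∈ Ioi (0:ℝ)) => hF0 g t s hs
    linarith
  set v : ℝ → ℝ := fun t => (1 + t) * g t with hv
  have hvpos : ∀ t, 0 < t → 0 < v t := fun t ht =>
    mul_pos (by linarith) (hl0.trans_le (hgl t))
  set h : ℝ → ℝ := fun s => W s * v s ^ (-p) with hh
  have hwQ : ∀ s, 0 < s → w s * Q g s = h s := by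
    intro s hs
    have : 0 < g s := hl0.trans_le (hgl s)
    simp only [hw, hQ, hh, hv, max_eq_right (hgl s)]
    rw [Real.mul_rpow (by linarith) this.le]
    ring
  have hhc : ContinuousOn h (Ioi 0) :=
    (hwc.mul (hQc g g.continuous).continuousOn).congr fun s hs => (hwQ s hs).symm
  have hhI : IntegrableOn (fun s => min s 1 * h s) (Ioi 0) := by
    refine Integrable.mono' hI ((ContinuousOn.mul (by fun_prop) hhc).aestronglyMeasurable
      measurableSet_Ioi) ?_
    filter_upwards [ae_restrict_mem measurableSet_Ioi] with s hs
    have hs0 : 0 < s := hs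
    have hm : 0 ≤ min s 1 := le_min hs0.le one_pos.le
    rw [← hwQ s hs0, Real.norm_of_nonneg (mul_nonneg hm (mul_nonneg (hw0 s hs0) (hQ0 g s)))]
    exact mul_le_mul_of_nonneg_left (mul_le_of_le_one_right (hw0 s hs0) (hQ1 g s)) hm
  obtain ⟨v1, hv1, hv2⟩ := green hhc hhI
  refine ⟨v, fun t => l * 1 + v1 t, hvpos, ?_, ?_⟩
  · intro t ht
    have hd := (((hasDerivAt_id t).const_add 1).const_mul l).add (hv1 t ht)
    refine hd.congr_of_eventuallyEq ?_
    filter_upwards [lt_mem_nhds ht] with y hy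
    have e : (1 + y) * (∫ s in Ioi (0:ℝ), F g y s) = ∫ s in Ioi (0:ℝ), min s y * h s := by
      rw [← integral_const_mul]
      refine setIntegral_congr_fun measurableSet_Ioi fun s hs => ?_
      simp only [hF]
      rw [hwQ s hs]
      simp only [hk, max_eq_left hy.le]
      have : 1 + y ≠ 0 := by positivity
      field_simp
    change (1 + y) * g y = l * (1 + y) + ∫ s in Ioi (0:ℝ), min s y * h s
    rw [hgt y, ← e]
    ring
  · intro t ht
    exact (hv2 t ht).const_add _

lemma sufficiency {N : ℕ} (hN : 3 ≤ N) (p : ℝ) (hp : 0 < p) (α β : ℝ) (φ : ℝ → ℝ)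
    (hφpos : ∀ r : ℝ, 0 < r → 0 < φ r) (hφc : ContinuousOn φ (Ioi 0))
    (c₂ : ℝ)
    (hα : ∀ r : ℝ, 0 < r → r < 1 → φ r ≤ c₂ * r ^ α)
    (hβ : ∀ r : ℝ, 1 < r → φ r ≤ c₂ * r ^ β)
    (h1 : 0 < (N:ℝ) + α + p * ((N:ℝ) - 2)) (h2 : β < -2) :
    ∃ u : EuclideanSpace ℝ (Fin N) → ℝ, IsSol φ p u := by
  have hN' : (3:ℝ) ≤ N := by exact_mod_cast hN
  have hneg : 2 - (N:ℝ) < 0 := by linarith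
  have hneg' : (2 - (N:ℝ))⁻¹ < 0 := inv_lt_zero.2 hneg
  have hn2 : 0 < ((N:ℝ) - 2) ^ 2 := by
    have : 0 < (N:ℝ) - 2 := by linarith
    positivity
  set R : ℝ → ℝ := fun s => s ^ (2 - (N:ℝ))⁻¹ with hR
  have hR0 : ∀ s, 0 < s → 0 < R s := fun s hs => Real.rpow_pos_of_pos hs _
  have hRc : ContinuousOn R (Ioi 0) := continuousOn_id.rpow_const fun s hs =>
    Or.inl (ne_of_gt hs)
  have hRp : ∀ s, 0 < s → ∀ a : ℝ, R s ^ a = s ^ (a / (2 - (N:ℝ))) := by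
    intro s hs a
    simp only [hR]
    rw [← Real.rpow_mul hs.le]
    congr 1
    field_simp
  set W : ℝ → ℝ := fun s => (((N:ℝ) - 2) ^ 2)⁻¹ * R s ^ (2 * (N:ℝ) - 2) * φ (R s) with hW
  have hWc : ContinuousOn W (Ioi 0) := by
    refine (continuousOn_const.mul (hRc.rpow_const fun s hs => Or.inl (hR0 s hs).ne')).mul
      (hφc.comp hRc fun s hs => hR0 s hs)
  have hW0 : ∀ s, 0 < s → 0 ≤ W s := by
    intro s hs
    have a1 := hR0 s hs
    have a2 := hφpos _ a1
    positivity
  set B : ℝ → ℝ := fun s => min s 1 * (W s * (1 + s) ^ (-p)) with hB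
  have hBc : ContinuousOn B (Ioi 0) := by
    refine ContinuousOn.mul (by fun_prop) (hWc.mul (ContinuousOn.rpow_const (by fun_prop) ?_))
    intro s hs
    have : (0:ℝ) < s := hs
    left; positivity
  have hB0 : ∀ s, 0 < s → 0 ≤ B s := fun s hs =>
    mul_nonneg (le_min hs.le one_pos.le) (mul_nonneg (hW0 s hs) (by positivity))
  have hI : IntegrableOn B (Ioi 0) := by
    rw [← Ioc_union_Ioi_eq_Ioi (zero_le_one (α := ℝ))]
    refine IntegrableOn.union ?_ ?_
    · rw [integrableOn_Ioc_iff_integrableOn_Ioo]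
      have hexp : -1 < ((N:ℝ) + β) / (2 - (N:ℝ)) := by
        rw [lt_div_iff_of_neg hneg]
        linarith
      refine Integrable.mono' (((intervalIntegral.integrableOn_Ioo_rpow_iff one_pos).2
        hexp).const_mul ((((N:ℝ) - 2) ^ 2)⁻¹ * c₂))
        ((hBc.mono Ioo_subset_Ioi_self).aestronglyMeasurable measurableSet_Ioo) ?_
      filter_upwards [ae_restrict_mem measurableSet_Ioo] with s hs
      have hs0 : 0 < s := hs.1
      have hR1 : 1 < R s := Real.one_lt_rpow_of_pos_of_lt_one_of_neg hs0 hs.2 hneg'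
      rw [Real.norm_of_nonneg (hB0 s hs0)]
      simp only [hB]
      rw [min_eq_left hs.2.le]
      have e : ((((N:ℝ) - 2) ^ 2)⁻¹ * c₂) * s ^ (((N:ℝ) + β) / (2 - (N:ℝ)))
          = s * ((((N:ℝ) - 2) ^ 2)⁻¹ * R s ^ (2 * (N:ℝ) - 2) * (c₂ * R s ^ β)) := by
        have : s ^ (((N:ℝ) + β) / (2 - (N:ℝ))) = s * (R s ^ (2 * (N:ℝ) - 2) * R s ^ β) := by
          rw [← Real.rpow_add (hR0 s hs0), hRp s hs0]
          nth_rewrite 2 [← Real.rpow_one s]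
          rw [← Real.rpow_add hs0]
          congr 1
          have hne := hneg.ne
          field_simp
          ring
        rw [this]; ring
      rw [e]
      refine mul_le_mul_of_nonneg_left ?_ hs0.le
      have a1 := hR0 s hs0
      have a2 : (1 + s) ^ (-p) ≤ 1 :=
        Real.rpow_le_one_of_one_le_of_nonpos (by linarith) (by linarith)
      refine (mul_le_of_le_one_right (hW0 s hs0) a2).trans ?_
      exact mul_le_mul_of_nonneg_left (hβ _ hR1) (by positivity)
    · have hexp : (2 * (N:ℝ) - 2 + α + p * ((N:ℝ) - 2)) / (2 - (N:ℝ)) < -1 := by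
        rw [div_lt_iff_of_neg hneg]
        linarith
      refine Integrable.mono' ((integrableOn_Ioi_rpow_of_lt hexp one_pos).const_mul
        ((((N:ℝ) - 2) ^ 2)⁻¹ * c₂))
        ((hBc.mono (Ioi_subset_Ioi zero_le_one)).aestronglyMeasurable measurableSet_Ioi) ?_
      filter_upwards [ae_restrict_mem measurableSet_Ioi] with s hs
      have hs1 : 1 < s := hs
      have hs0 : 0 < s := by linarith
      have hR1 : R s < 1 := Real.rpow_lt_one_of_one_lt_of_neg hs1 hneg'
      rw [Real.norm_of_nonneg (hB0 s hs0)]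
      simp only [hB]
      rw [min_eq_right hs1.le, one_mul]
      have e : ((((N:ℝ) - 2) ^ 2)⁻¹ * c₂) *
          s ^ ((2 * (N:ℝ) - 2 + α + p * ((N:ℝ) - 2)) / (2 - (N:ℝ)))
          = ((((N:ℝ) - 2) ^ 2)⁻¹ * R s ^ (2 * (N:ℝ) - 2) * (c₂ * R s ^ α)) * s ^ (-p) := by
        have : s ^ ((2 * (N:ℝ) - 2 + α + p * ((N:ℝ) - 2)) / (2 - (N:ℝ)))
            = (R s ^ (2 * (N:ℝ) - 2) * R s ^ α) * s ^ (-p) := by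
          rw [← Real.rpow_add (hR0 s hs0), hRp s hs0, ← Real.rpow_add hs0]
          congr 1
          have hne := hneg.ne
          field_simp
          ring
        rw [this]; ring
      rw [e]
      have a1 := hR0 s hs0
      have a2 : (1 + s) ^ (-p) ≤ s ^ (-p) :=
        Real.rpow_le_rpow_of_nonpos hs0 (by linarith) (by linarith)
      have a3 : W s ≤ (((N:ℝ) - 2) ^ 2)⁻¹ * R s ^ (2 * (N:ℝ) - 2) * (c₂ * R s ^ α) :=
        mul_le_mul_of_nonneg_left (hα _ a1 hR1) (by positivity)
      exact mul_le_mul a3 a2 (by positivity) ((hW0 s hs0).trans a3)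
  obtain ⟨v, v1, hv0, hv1, hv2⟩ := ode_exists hp hWc hW0 hI
  have hvc : ContinuousOn v (Ioi 0) := fun t ht =>
    (hv1 t ht).continuousAt.continuousWithinAt
  have hcd : ContDiffOn ℝ 2 v (Ioi 0) := contDiffOn_two_of_hasDerivAt hv1 hv2
    (hWc.mul (hvc.rpow_const fun t ht => Or.inl (hv0 t ht).ne')).neg
  refine ⟨fun x => v (‖x‖ ^ (2 - (N:ℝ))), ?_, ?_⟩
  · intro x hx
    exact (contDiffAt_comp_fund hcd hx).contDiffWithinAt
  · intro x hx
    have hr0 : 0 < ‖x‖ := norm_pos_iff.2 hx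
    have ht : 0 < ‖x‖ ^ (2 - (N:ℝ)) := Real.rpow_pos_of_pos hr0 _
    refine ⟨hv0 _ ht, ?_⟩
    rw [laplacian_comp_fund hx hv1 (hv2 _ ht)]
    have eR : R (‖x‖ ^ (2 - (N:ℝ))) = ‖x‖ := Real.rpow_rpow_inv hr0.le hneg.ne
    simp only [hW, eR]
    have e : ‖x‖ ^ (2 * (N:ℝ) - 2) * ‖x‖ ^ (2 - 2 * (N:ℝ)) = 1 := by
      rw [← Real.rpow_add hr0]
      have : 2 * (N:ℝ) - 2 + (2 - 2 * (N:ℝ)) = 0 := by ring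
      rw [this, Real.rpow_zero]
    have e2 : (((N:ℝ) - 2) ^ 2)⁻¹ * ((N:ℝ) - 2) ^ 2 = 1 := inv_mul_cancel₀ hn2.ne'
    calc _ = ((((N:ℝ) - 2) ^ 2)⁻¹ * ((N:ℝ) - 2) ^ 2)
          * (‖x‖ ^ (2 * (N:ℝ) - 2) * ‖x‖ ^ (2 - 2 * (N:ℝ)))
          * (φ ‖x‖ * v (‖x‖ ^ (2 - (N:ℝ))) ^ (-p)) := by ring
      _ = _ := by rw [e, e2]; ring

/-- Theorem 4.2 (existence part): `-Δu = φ(|x|) u^{-p}` has `C²` positive solutions on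
`ℝ^N \ {0}` iff `N + α + p(N-2) > 0` and `β < -2`. -/
theorem statement_13 {N : ℕ} (hN : 3 ≤ N) (p : ℝ) (hp : 0 < p) (α β : ℝ)
    (γ : NNReal) (hγ0 : 0 < γ) (hγ1 : γ < 1) (φ : ℝ → ℝ)
    (hφpos : ∀ r : ℝ, 0 < r → 0 < φ r)
    (hφhold : ∀ s : Set ℝ, IsCompact s → s ⊆ Ioi (0:ℝ) → ∃ C : NNReal, HolderOnWith C γ φ s)
    (c₁ c₂ : ℝ) (hc₁ : 0 < c₁) (hc₂ : 0 < c₂)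
    (hα : ∀ r : ℝ, 0 < r → r < 1 → c₁ * r ^ α ≤ φ r ∧ φ r ≤ c₂ * r ^ α)
    (hβ : ∀ r : ℝ, 1 < r → c₁ * r ^ β ≤ φ r ∧ φ r ≤ c₂ * r ^ β) :
    (∃ u : EuclideanSpace ℝ (Fin N) → ℝ, IsSol φ p u) ↔
      (0 < (N:ℝ) + α + p * ((N:ℝ) - 2) ∧ β < -2) := by
  have hφc : ContinuousOn φ (Ioi 0) := by
    intro r hr
    have hr0 : (0:ℝ) < r := hr
    obtain ⟨C, hC⟩ := hφhold (Icc (r / 2) (2 * r)) isCompact_Icc (by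
      intro s hs
      have : r / 2 ≤ s := hs.1
      change 0 < s
      linarith)
    exact ((hC.continuousOn hγ0).continuousAt
      (Icc_mem_nhds (by linarith) (by linarith))).continuousWithinAt
  constructor
  · rintro ⟨u, hu⟩
    exact ⟨necessity_alpha hN p hp α φ hφpos c₁ hc₁ (fun r h0 h1 => (hα r h0 h1).1) u hu,
      necessity_beta hN p hp β φ hφpos c₁ hc₁ (fun r h1 => (hβ r h1).1) u hu⟩
  · rintro ⟨h1, h2⟩
    exact sufficiency hN p hp α β φ hφpos hφc c₂ (fun r h0 h1 => (hα r h0 h1).2)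
      (fun r h1 => (hβ r h1).2) h1 h2
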